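/- arXiv:2010.12856 — 3 statements merged into one kernel-verified Lean document; each statement's English description precedes it below -/
import Mathlib

section
/- If h : (0,∞) → (0,∞) is operator monotone, then for all positive definite matrices A, B and all t ∈ [0,1], h(A !_t B) ≤ h(A) !_t h(B), where X !_t Y = ((1-t)X⁻¹ + tY⁻¹)⁻¹. -/
open scoped ComplexOrder Kronecker

/-- Matrix power via the continuous functional calculus. -/
noncomputable def mpow {n : Type*} [Fintype n] [DecidableEq n]
    (A : Matrix n n ℂ) (p : ℝ) : Matrix n n ℂ :=
  cfc (fun x : ℝ => x ^ p) A

/-- The Loewner order on matrices. -/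
def LoewnerLE {n : Type*} [Fintype n] (A B : Matrix n n ℂ) : Prop :=
  (B - A).PosSemidef

/-- The matrix geometric mean `A # B = A^{1/2}(A^{-1/2} B A^{-1/2})^{1/2} A^{1/2}`. -/
noncomputable def geo {n : Type*} [Fintype n] [DecidableEq n]
    (A B : Matrix n n ℂ) : Matrix n n ℂ :=
  mpow A (1/2) * mpow (mpow A (-(1/2)) * B * mpow A (-(1/2))) (1/2) * mpow A (1/2)

/-- The generalized Kantorovich constant. -/
noncomputable def Kconst (h p : ℝ) : ℝ :=
  ((h ^ p - h) / ((p - 1) * (h - 1))) *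
    (((p - 1) / p) * ((h ^ p - 1) / (h ^ p - h))) ^ p

/-- The Specht ratio. -/
noncomputable def Specht (h : ℝ) : ℝ :=
  if h = 1 then 1 else (h - 1) * h ^ (1 / (h - 1)) / (Real.exp 1 * Real.log h)

/-!
A positive definite block matrix `T` has a Schur complement `S₁` of its lower right block and a
Schur complement `S₂` of its upper left block. They are extremal: every positive definite
`X ⊕ Y ≤ T` has `X ≤ S₁`, while `r • S₁ ⊕ (1 - r) • S₂ ≤ T` for `0 < r < 1`. Applying an operator
monotone `h` to the latter inequality, and then the former to `h(T)`, bounds `h(r • S₁)` by the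
Schur complement of `h(T)`. Since `A !_t B` is the Schur complement of a rotation of `A ⊕ B`, this
reads `h(r • (A !_t B)) ≤ h(A) !_t h(B)`. For suitable multiples `A`, `B` of a single matrix `X` it
implies `r ^ 3 • h(X) ≤ h(r • X)`, which replaces continuity of `h` in the limit `r → 1`.
-/

open Filter Matrix Polynomial Topology Unitary

section

open scoped MatrixOrder

variable {𝕜 : Type*} [RCLike 𝕜] {m n : Type*}

lemma posDef_of_le {A B : Matrix n n 𝕜} (hA : A.PosDef) (hAB : A ≤ B) : B.PosDef := by
  simpa using hA.add_posSemidef hAB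

lemma posDef_convexCombination {A B : Matrix n n 𝕜} (hA : A.PosDef) (hB : B.PosDef) {t : ℝ}
    (ht0 : 0 ≤ t) (ht1 : t ≤ 1) : ((1 - t) • A + t • B).PosDef := by
  rcases ht0.eq_or_lt with rfl | ht0
  · simpa using hA
  · exact PosDef.posSemidef_add (hA.posSemidef.smul (sub_nonneg.2 ht1)) (hB.smul ht0)

lemma isClosed_setOf_posSemidef [Finite n] : IsClosed {M : Matrix n n 𝕜 | M.PosSemidef} := by
  have := Fintype.ofFinite n
  simp only [posSemidef_iff_dotProduct_mulVec, IsHermitian, Set.ofPred_and, Set.ofPred_forall]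
  refine (isClosed_eq (by fun_prop) continuous_id).inter (isClosed_iInter fun x => ?_)
  exact isClosed_le continuous_const (by fun_prop)

lemma posDef_fromBlocks_diagonal [Finite m] [Finite n] {A : Matrix m m 𝕜} {B : Matrix n n 𝕜}
    (hA : A.PosDef) (hB : B.PosDef) : (fromBlocks A 0 0 B).PosDef := by
  classical
  have := Fintype.ofFinite m
  have := Fintype.ofFinite n
  have : Invertible A := hA.isUnit.invertible
  have hpsd : (fromBlocks A 0 0 B).PosSemidef := by
    simpa using (PosDef.fromBlocks₁₁ 0 B hA).2 (by simpa using hB.posSemidef)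
  exact hpsd.posDef_iff_isUnit.2 (isUnit_fromBlocks_zero₂₁.2 ⟨hA.isUnit, hB.isUnit⟩)

lemma le_fromBlocks_smul_toBlocks [Finite m] [Finite n] {M : Matrix (m ⊕ n) (m ⊕ n) 𝕜}
    (hM : M.PosSemidef) {r : ℝ} (hr0 : 0 < r) (hr1 : r < 1) :
    M ≤ fromBlocks (r⁻¹ • M.toBlocks₁₁) 0 0 ((1 - r)⁻¹ • M.toBlocks₂₂) := by
  classical
  have := Fintype.ofFinite m
  have := Fintype.ofFinite n
  have hr : 0 < 1 - r := sub_pos.2 hr1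
  obtain ⟨s, hs⟩ : ∃ s : ℝ, s * s = (1 - r) / r := ⟨_, Real.mul_self_sqrt (by positivity)⟩
  have hs0 : s ≠ 0 := by
    rintro rfl
    exact (div_pos hr hr0).ne (by simpa using hs)
  have hs₁ : s * s = r⁻¹ - 1 := by rw [hs]; field_simp
  have hs₂ : s⁻¹ * s⁻¹ = (1 - r)⁻¹ - 1 := by rw [← mul_inv, hs]; field_simp; ring
  -- `S` is chosen so that the off-diagonal blocks of `M` and `S * M * Sᴴ` cancel.
  let S : Matrix (m ⊕ n) (m ⊕ n) 𝕜 := fromBlocks (s • 1) 0 0 (-(s⁻¹ • 1))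
  suffices h : fromBlocks (r⁻¹ • M.toBlocks₁₁) 0 0 ((1 - r)⁻¹ • M.toBlocks₂₂) = M + S * M * Sᴴ by
    rw [h]
    exact le_add_of_nonneg_right (nonneg_iff_posSemidef.2 (hM.mul_mul_conjTranspose_same S))
  nth_rw 3 4 [← fromBlocks_toBlocks M]
  simp only [S, fromBlocks_add, fromBlocks_conjTranspose, fromBlocks_multiply]
  congr 1
  · simp [smul_smul, hs₁, sub_smul]
  · simp [smul_smul, hs0]
  · simp [smul_smul, hs0]
  · simp [smul_smul, hs₂, sub_smul]

variable [Fintype m] [Fintype n] [DecidableEq m] [DecidableEq n]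

lemma inv_inv_of_posDef {A : Matrix n n 𝕜} (hA : A.PosDef) : A⁻¹⁻¹ = A :=
  nonsing_inv_nonsing_inv A ((isUnit_iff_isUnit_det A).1 hA.isUnit)

lemma inv_real_smul {r : ℝ} (hr : r ≠ 0) {A : Matrix n n 𝕜} (hA : IsUnit A) :
    (r • A)⁻¹ = r⁻¹ • A⁻¹ := by
  refine inv_eq_right_inv ?_
  rw [smul_mul_smul_comm, mul_inv_cancel₀ hr, one_smul,
    mul_nonsing_inv A ((isUnit_iff_isUnit_det A).1 hA)]

lemma inv_le_inv_of_posDef {A B : Matrix n n 𝕜} (hA : A.PosDef) (hAB : A ≤ B) : B⁻¹ ≤ A⁻¹ := by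
  have hB := posDef_of_le hA hAB
  have : Invertible B := hB.isUnit.invertible
  have : Invertible A⁻¹ := hA.inv.isUnit.invertible
  have hblock : (fromBlocks B 1 1ᴴ A⁻¹).PosSemidef :=
    (PosDef.fromBlocks₂₂ B 1 hA.inv).2 (by simpa [inv_inv_of_posDef hA] using! hAB)
  simpa using! (PosDef.fromBlocks₁₁ 1 A⁻¹ hB).1 hblock

lemma inv_fromBlocks_diagonal {A : Matrix m m 𝕜} {B : Matrix n n 𝕜} (hA : IsUnit A)
    (hB : IsUnit B) : (fromBlocks A 0 0 B)⁻¹ = fromBlocks A⁻¹ 0 0 B⁻¹ := by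
  simp [inv_fromBlocks_zero₂₁_of_isUnit_iff A 0 B (iff_of_true hA hB)]

lemma exists_polynomial_eqOn_of_finite {F : Type*} [Field F] (f : F → F) {s : Set F}
    (hs : s.Finite) : ∃ p : F[X], s.EqOn f p.eval := by
  classical
  exact ⟨Lagrange.interpolate hs.toFinset id f, fun _ hx =>
    (Lagrange.eval_interpolate_at_node f Function.injective_id.injOn (hs.mem_toFinset.2 hx)).symm⟩

lemma cfc_eq_aeval_of_eqOn {f : ℝ → ℝ} {p : ℝ[X]} {X : Matrix n n 𝕜} (hX : X.IsHermitian)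
    (h : (spectrum ℝ X).EqOn f p.eval) : cfc f X = aeval X p := by
  rw [cfc_congr h, cfc_polynomial p X hX.isSelfAdjoint]

lemma map_cfc_of_isHermitian {F : Type*} [FunLike F (Matrix n n 𝕜) (Matrix m m 𝕜)]
    [AlgHomClass F ℝ (Matrix n n 𝕜) (Matrix m m 𝕜)] (φ : F) (f : ℝ → ℝ)
    {X : Matrix n n 𝕜} (hX : X.IsHermitian) (hφX : (φ X).IsHermitian) :
    φ (cfc f X) = cfc f (φ X) := by
  obtain ⟨p, hp⟩ := exists_polynomial_eqOn_of_finite f (finite_real_spectrum (A := X))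
  rw [cfc_eq_aeval_of_eqOn hX hp,
    cfc_eq_aeval_of_eqOn hφX (hp.mono (AlgHom.spectrum_apply_subset φ X)), aeval_algHom_apply]

lemma aeval_fromBlocks_diagonal (p : ℝ[X]) (X : Matrix m m 𝕜) (Y : Matrix n n 𝕜) :
    aeval (fromBlocks X 0 0 Y) p = fromBlocks (aeval X p) 0 0 (aeval Y p) := by
  induction p using Polynomial.induction_on' with
  | add p q hp hq => simp [hp, hq, fromBlocks_add]
  | monomial k a =>
    simp [aeval_monomial, ← Algebra.smul_def, fromBlocks_diagonal_pow, fromBlocks_smul]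

lemma cfc_fromBlocks_diagonal (f : ℝ → ℝ) {X : Matrix m m 𝕜} {Y : Matrix n n 𝕜}
    (hX : X.IsHermitian) (hY : Y.IsHermitian) :
    cfc f (fromBlocks X 0 0 Y) = fromBlocks (cfc f X) 0 0 (cfc f Y) := by
  obtain ⟨p, hp⟩ := exists_polynomial_eqOn_of_finite f
    (((finite_real_spectrum (A := X)).union (finite_real_spectrum (A := Y))).union
      (finite_real_spectrum (A := fromBlocks X 0 0 Y)))
  simp only [Set.eqOn_union] at hp
  rw [cfc_eq_aeval_of_eqOn hX hp.1.1, cfc_eq_aeval_of_eqOn hY hp.1.2,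
    cfc_eq_aeval_of_eqOn (hX.fromBlocks conjTranspose_zero hY) hp.2, aeval_fromBlocks_diagonal]

lemma posDef_cfc {f : ℝ → ℝ} (hf : ∀ x, 0 < x → 0 < f x) {A : Matrix n n 𝕜} (hA : A.PosDef) :
    (cfc f A).PosDef := by
  rw [← isStrictlyPositive_iff_posDef, cfc_isStrictlyPositive_iff f A
    (finite_real_spectrum.continuousOn f) hA.isHermitian.isSelfAdjoint,
    hA.isHermitian.spectrum_real_eq_range_eigenvalues]
  rintro _ ⟨i, rfl⟩
  exact hf _ (hA.eigenvalues_pos i)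

/-- The Schur complement `T₁₁ - T₁₂ T₂₂⁻¹ T₂₁` of the lower right block of `T`, written as the
inverse of the upper left block of `T⁻¹`; the two agree when `T` is positive definite. -/
noncomputable def schurComplement (T : Matrix (m ⊕ n) (m ⊕ n) 𝕜) : Matrix m m 𝕜 :=
  (T⁻¹.toBlocks₁₁)⁻¹

lemma schurComplement_posDef {T : Matrix (m ⊕ n) (m ⊕ n) 𝕜} (hT : T.PosDef) :
    (schurComplement T).PosDef :=
  (hT.inv.submatrix Sum.inl_injective).inv

lemma le_schurComplement_of_fromBlocks_le {A : Matrix m m 𝕜} {B : Matrix n n 𝕜}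
    {T : Matrix (m ⊕ n) (m ⊕ n) 𝕜} (hA : A.PosDef) (hB : B.PosDef)
    (h : fromBlocks A 0 0 B ≤ T) : A ≤ schurComplement T := by
  have hAB := posDef_fromBlocks_diagonal hA hB
  have hinv : T⁻¹ ≤ fromBlocks A⁻¹ 0 0 B⁻¹ := by
    simpa only [inv_fromBlocks_diagonal hA.isUnit hB.isUnit] using inv_le_inv_of_posDef hAB h
  have hblock : T⁻¹.toBlocks₁₁ ≤ A⁻¹ := PosSemidef.submatrix hinv Sum.inl
  have hinv' := inv_le_inv_of_posDef ((posDef_of_le hAB h).inv.submatrix Sum.inl_injective) hblock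
  rwa [inv_inv_of_posDef hA] at hinv'

lemma fromBlocks_smul_schurComplement_le {T : Matrix (m ⊕ n) (m ⊕ n) 𝕜} (hT : T.PosDef) {r : ℝ}
    (hr0 : 0 < r) (hr1 : r < 1) :
    fromBlocks (r • schurComplement T) 0 0 ((1 - r) • (T⁻¹.toBlocks₂₂)⁻¹) ≤ T := by
  have hr : 0 < 1 - r := sub_pos.2 hr1
  have h₁ : T⁻¹.toBlocks₁₁.PosDef := hT.inv.submatrix Sum.inl_injective
  have h₂ : T⁻¹.toBlocks₂₂.PosDef := hT.inv.submatrix Sum.inr_injective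
  have h := inv_le_inv_of_posDef hT.inv (le_fromBlocks_smul_toBlocks hT.inv.posSemidef hr0 hr1)
  rwa [inv_inv_of_posDef hT, inv_fromBlocks_diagonal (h₁.smul (inv_pos.2 hr0)).isUnit
    (h₂.smul (inv_pos.2 hr)).isUnit, inv_real_smul (inv_ne_zero hr0.ne') h₁.isUnit,
    inv_real_smul (inv_ne_zero hr.ne') h₂.isUnit, inv_inv, inv_inv] at h

/-- The weighted harmonic mean `A !_t B`. -/
noncomputable def harmonicMean (t : ℝ) (A B : Matrix n n 𝕜) : Matrix n n 𝕜 :=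
  ((1 - t) • A⁻¹ + t • B⁻¹)⁻¹

lemma harmonicMean_posDef {A B : Matrix n n 𝕜} (hA : A.PosDef) (hB : B.PosDef) {t : ℝ}
    (ht0 : 0 ≤ t) (ht1 : t ≤ 1) : (harmonicMean t A B).PosDef :=
  (posDef_convexCombination hA.inv hB.inv ht0 ht1).inv

lemma harmonicMean_le_inv_smul_left {A B : Matrix n n 𝕜} (hA : A.PosDef) (hB : B.PosSemidef)
    {t : ℝ} (ht0 : 0 ≤ t) (ht1 : t < 1) : harmonicMean t A B ≤ (1 - t)⁻¹ • A := by
  have ht : 0 < 1 - t := sub_pos.2 ht1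
  have h := inv_le_inv_of_posDef (hA.inv.smul ht)
    (le_add_of_nonneg_right (nonneg_iff_posSemidef.2 (hB.inv.smul ht0)))
  rwa [inv_real_smul ht.ne' hA.inv.isUnit, inv_inv_of_posDef hA] at h

lemma harmonicMean_smul_smul {A : Matrix n n 𝕜} (hA : IsUnit A) {t a b : ℝ} (ha : a ≠ 0)
    (hb : b ≠ 0) (h : (1 - t) * a⁻¹ + t * b⁻¹ ≠ 0) :
    harmonicMean t (a • A) (b • A) = ((1 - t) * a⁻¹ + t * b⁻¹)⁻¹ • A := by
  have hA' : IsUnit A⁻¹ := isUnit_nonsing_inv_iff.2 hA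
  rw [harmonicMean, inv_real_smul ha hA, inv_real_smul hb hA, smul_smul, smul_smul, ← add_smul,
    inv_real_smul h hA', nonsing_inv_nonsing_inv A ((isUnit_iff_isUnit_det A).1 hA)]

/-- The unitary block matrix of the rotation by the angle `-θ`, used to realise a harmonic mean
as a Schur complement. -/
noncomputable def blockRotation (𝕜 n : Type*) [RCLike 𝕜] [Fintype n] [DecidableEq n] (θ : ℝ) :
    unitary (Matrix (n ⊕ n) (n ⊕ n) 𝕜) :=
  ⟨fromBlocks (Real.cos θ • 1) (Real.sin θ • 1) (-(Real.sin θ • 1)) (Real.cos θ • 1), by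
    rw [← unitaryGroup, mem_unitaryGroup_iff, star_eq_conjTranspose, fromBlocks_conjTranspose,
      fromBlocks_multiply, ← fromBlocks_one]
    have hcs : Real.cos θ * Real.cos θ + Real.sin θ * Real.sin θ = 1 := by
      rw [← sq, ← sq, Real.cos_sq_add_sin_sq]
    congr 1
    · simp [smul_smul, ← add_smul, hcs]
    · simp [smul_smul, mul_comm]
    · simp [smul_smul, mul_comm]
    · simp [smul_smul, ← add_smul, add_comm, hcs]⟩

/-- The direct sum `A ⊕ B` conjugated by `blockRotation`. -/
noncomputable def rotatedDirectSum (θ : ℝ) (A B : Matrix n n 𝕜) :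
    Matrix (n ⊕ n) (n ⊕ n) 𝕜 :=
  conjStarAlgAut ℝ _ (blockRotation 𝕜 n θ) (fromBlocks A 0 0 B)

lemma toBlocks₁₁_rotatedDirectSum (θ : ℝ) (A B : Matrix n n 𝕜) :
    (rotatedDirectSum θ A B).toBlocks₁₁ = (1 - Real.sin θ ^ 2) • A + Real.sin θ ^ 2 • B := by
  simp [rotatedDirectSum, blockRotation, star_eq_conjTranspose, fromBlocks_conjTranspose,
    fromBlocks_multiply, smul_smul, ← sq, Real.cos_sq']

lemma inv_rotatedDirectSum (θ : ℝ) {A B : Matrix n n 𝕜} (hA : IsUnit A) (hB : IsUnit B) :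
    (rotatedDirectSum θ A B)⁻¹ = rotatedDirectSum θ A⁻¹ B⁻¹ := by
  refine inv_eq_right_inv ?_
  rw [rotatedDirectSum, rotatedDirectSum, ← inv_fromBlocks_diagonal hA hB, ← map_mul,
    mul_nonsing_inv _ ((isUnit_iff_isUnit_det _).1 (isUnit_fromBlocks_zero₂₁.2 ⟨hA, hB⟩)), map_one]

lemma schurComplement_rotatedDirectSum (θ : ℝ) {A B : Matrix n n 𝕜} (hA : IsUnit A)
    (hB : IsUnit B) :
    schurComplement (rotatedDirectSum θ A B) = harmonicMean (Real.sin θ ^ 2) A B := by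
  rw [schurComplement, inv_rotatedDirectSum θ hA hB, toBlocks₁₁_rotatedDirectSum, harmonicMean]

lemma rotatedDirectSum_posDef (θ : ℝ) {A B : Matrix n n 𝕜} (hA : A.PosDef) (hB : B.PosDef) :
    (rotatedDirectSum θ A B).PosDef :=
  (IsUnit.posDef_star_right_conjugate_iff (Unitary.toUnits (blockRotation 𝕜 n θ)).isUnit).2
    (posDef_fromBlocks_diagonal hA hB)

lemma cfc_rotatedDirectSum (f : ℝ → ℝ) (θ : ℝ) {A B : Matrix n n 𝕜} (hA : A.IsHermitian)
    (hB : B.IsHermitian) :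
    cfc f (rotatedDirectSum θ A B) = rotatedDirectSum θ (cfc f A) (cfc f B) := by
  have hAB : (fromBlocks A 0 0 B).IsHermitian := hA.fromBlocks conjTranspose_zero hB
  rw [rotatedDirectSum, rotatedDirectSum, ← cfc_fromBlocks_diagonal f hA hB]
  exact (map_cfc_of_isHermitian _ f hAB (hAB.isSelfAdjoint.map _).isHermitian).symm

/-- The operator monotone functions on `(0, ∞)`: those whose functional calculus preserves the
Loewner order between positive definite matrices over `𝕜` of every size. -/
def IsOperatorMonotone (𝕜 : Type*) [RCLike 𝕜] (f : ℝ → ℝ) : Prop :=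
  ∀ (k : ℕ) (A B : Matrix (Fin k) (Fin k) 𝕜), A.PosDef → B.PosDef → A ≤ B → cfc f A ≤ cfc f B

namespace IsOperatorMonotone

variable {f : ℝ → ℝ} (hf : IsOperatorMonotone 𝕜 f)

include hf

lemma cfc_le_cfc {A B : Matrix n n 𝕜} (hA : A.PosDef) (hAB : A ≤ B) : cfc f A ≤ cfc f B := by
  have hB := posDef_of_le hA hAB
  let e := Fintype.equivFin n
  let φ := reindexAlgEquiv ℝ 𝕜 e
  have hφ {M : Matrix n n 𝕜} (hM : M.PosDef) : (φ M).PosDef := hM.submatrix e.symm.injective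
  have hφAB : φ A ≤ φ B := by
    rw [le_iff, ← map_sub]
    exact PosSemidef.submatrix hAB _
  have key := hf _ _ _ (hφ hA) (hφ hB) hφAB
  rw [← map_cfc_of_isHermitian φ f hA.isHermitian (hφ hA).isHermitian,
    ← map_cfc_of_isHermitian φ f hB.isHermitian (hφ hB).isHermitian, le_iff, ← map_sub] at key
  exact (posSemidef_submatrix_equiv e.symm).1 key

variable (hpos : ∀ x, 0 < x → 0 < f x)

include hpos

lemma cfc_smul_schurComplement_le {T : Matrix (m ⊕ n) (m ⊕ n) 𝕜} (hT : T.PosDef) {r : ℝ}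
    (hr0 : 0 < r) (hr1 : r < 1) :
    cfc f (r • schurComplement T) ≤ schurComplement (cfc f T) := by
  have hS : (r • schurComplement T).PosDef := (schurComplement_posDef hT).smul hr0
  have hR : ((1 - r) • (T⁻¹.toBlocks₂₂)⁻¹).PosDef :=
    (hT.inv.submatrix Sum.inr_injective).inv.smul (sub_pos.2 hr1)
  refine le_schurComplement_of_fromBlocks_le (posDef_cfc hpos hS) (posDef_cfc hpos hR) ?_
  rw [← cfc_fromBlocks_diagonal f hS.isHermitian hR.isHermitian]
  exact hf.cfc_le_cfc (posDef_fromBlocks_diagonal hS hR)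
    (fromBlocks_smul_schurComplement_le hT hr0 hr1)

lemma cfc_smul_harmonicMean_le {A B : Matrix n n 𝕜} (hA : A.PosDef) (hB : B.PosDef) {t : ℝ}
    (ht0 : 0 ≤ t) (ht1 : t ≤ 1) {r : ℝ} (hr0 : 0 < r) (hr1 : r < 1) :
    cfc f (r • harmonicMean t A B) ≤ harmonicMean t (cfc f A) (cfc f B) := by
  obtain ⟨θ, rfl⟩ : ∃ θ : ℝ, Real.sin θ ^ 2 = t := by
    refine ⟨Real.arcsin √t, ?_⟩
    rw [Real.sin_arcsin (by linarith [Real.sqrt_nonneg t]) (Real.sqrt_le_one.2 ht1),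
      Real.sq_sqrt ht0]
  have h := hf.cfc_smul_schurComplement_le hpos (rotatedDirectSum_posDef θ hA hB) hr0 hr1
  rwa [cfc_rotatedDirectSum f θ hA.isHermitian hB.isHermitian,
    schurComplement_rotatedDirectSum θ hA.isUnit hB.isUnit,
    schurComplement_rotatedDirectSum θ (posDef_cfc hpos hA).isUnit
      (posDef_cfc hpos hB).isUnit] at h

lemma pow_three_smul_cfc_le {A : Matrix n n 𝕜} (hA : A.PosDef) {r : ℝ} (hr0 : 0 < r)
    (hr1 : r < 1) : r ^ 3 • cfc f A ≤ cfc f (r • A) := by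
  have hr3 : r ^ 3 < 1 := pow_lt_one₀ hr0.le hr1 three_ne_zero
  -- `b` is chosen so that the harmonic mean of `r • A` and `b • A` is `r⁻¹ • A`.
  let b := (1 + r + r ^ 2) / r
  have hb : 0 < b := by positivity
  have hrA : (r • A).PosDef := hA.smul hr0
  have hbA : (b • A).PosDef := hA.smul hb
  have hcoeff : (1 - (1 - r ^ 3)) * r⁻¹ + (1 - r ^ 3) * b⁻¹ = r := by
    simp only [b]
    field_simp
    ring
  have hmean : r • harmonicMean (1 - r ^ 3) (r • A) (b • A) = A := by
    rw [harmonicMean_smul_smul hA.isUnit hr0.ne' hb.ne' (by rw [hcoeff]; exact hr0.ne'), hcoeff,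
      smul_inv_smul₀ hr0.ne']
  have h : cfc f A ≤ (r ^ 3)⁻¹ • cfc f (r • A) := by
    calc cfc f A = cfc f (r • harmonicMean (1 - r ^ 3) (r • A) (b • A)) := by rw [hmean]
      _ ≤ harmonicMean (1 - r ^ 3) (cfc f (r • A)) (cfc f (b • A)) :=
        hf.cfc_smul_harmonicMean_le hpos hrA hbA (by linarith) (by linarith [pow_pos hr0 3]) hr0 hr1
      _ ≤ (1 - (1 - r ^ 3))⁻¹ • cfc f (r • A) :=
        harmonicMean_le_inv_smul_left (posDef_cfc hpos hrA) (posDef_cfc hpos hbA).posSemidef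
          (by linarith) (by linarith [pow_pos hr0 3])
      _ = (r ^ 3)⁻¹ • cfc f (r • A) := by rw [sub_sub_cancel]
  have h' := smul_le_smul_of_nonneg_left h (pow_pos hr0 3).le
  rwa [smul_inv_smul₀ (pow_pos hr0 3).ne'] at h'

end IsOperatorMonotone

theorem opMonotone_harmonic_mean_general {f : ℝ → ℝ} (hf : IsOperatorMonotone 𝕜 f)
    (hpos : ∀ x, 0 < x → 0 < f x) {A B : Matrix n n 𝕜} (hA : A.PosDef) (hB : B.PosDef) {t : ℝ}
    (ht0 : 0 ≤ t) (ht1 : t ≤ 1) :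
    cfc f (harmonicMean t A B) ≤ harmonicMean t (cfc f A) (cfc f B) := by
  set H := harmonicMean t A B
  set K := harmonicMean t (cfc f A) (cfc f B)
  have happrox : ∀ r ∈ Set.Ioo (0 : ℝ) 1, r ^ 3 • cfc f H ≤ K := fun r hr =>
    (hf.pow_three_smul_cfc_le hpos (harmonicMean_posDef hA hB ht0 ht1) hr.1 hr.2).trans
      (hf.cfc_smul_harmonicMean_le hpos hA hB ht0 ht1 hr.1 hr.2)
  have hlim : Tendsto (fun r : ℝ => K - r ^ 3 • cfc f H) (𝓝[<] 1) (𝓝 (K - cfc f H)) := by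
    have hcont : Continuous fun r : ℝ => K - r ^ 3 • cfc f H := by fun_prop
    simpa using (hcont.tendsto 1).mono_left nhdsWithin_le_nhds
  exact isClosed_setOf_posSemidef.mem_of_tendsto hlim
    (mem_of_superset (Ioo_mem_nhdsLT zero_lt_one) happrox)

end

theorem opMonotone_harmonic_mean (h : ℝ → ℝ)
    (hh_pos : ∀ x : ℝ, 0 < x → 0 < h x)
    (hh_mono : ∀ (m : ℕ) (A B : Matrix (Fin m) (Fin m) ℂ),
      A.PosDef → B.PosDef → LoewnerLE A B → LoewnerLE (cfc h A) (cfc h B))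
    (n : ℕ) (A B : Matrix (Fin n) (Fin n) ℂ) (hA : A.PosDef) (hB : B.PosDef)
    (t : ℝ) (ht0 : 0 ≤ t) (ht1 : t ≤ 1) :
    LoewnerLE (cfc h (((1 - t) • A⁻¹ + t • B⁻¹)⁻¹))
      (((1 - t) • (cfc h A)⁻¹ + t • (cfc h B)⁻¹)⁻¹) :=
  opMonotone_harmonic_mean_general hh_mono hh_pos hA hB ht0 ht1
end

section
/- For p, q ∈ [-1,0] the map (A,B) ↦ A^p ⊗ B^q on positive definite matrices is jointly log-convex: (A₁∇A₂)^p ⊗ (B₁∇B₂)^q ≤ (A₁^p ⊗ B₁^q) # (A₂^p ⊗ B₂^q), where ∇ is the arithmetic mean and # the matrix geometric mean. -/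
open scoped ComplexOrder Kronecker

/-!
The geometric mean `a # b` is the unique nonnegative solution of the Riccati equation
`t a⁻¹ t = b`, and every nonnegative `t` with `t a⁻¹ t ≤ b` lies below it. For `t = (a ∇ b)⁻¹` this
gives `(a ∇ b)⁻¹ ≤ a⁻¹ # b⁻¹`, which operator concavity of `x ↦ x ^ (-p)` upgrades to
`(a ∇ b) ^ p ≤ a ^ p # b ^ p` for `p ∈ [-1, 0]`. By uniqueness the geometric mean commutes with
Kronecker products, so the inequalities for the two tensor factors multiply.
-/

open Ring CFC

lemma four_mul_le_add_mul_ringInverse_mul_add {R : Type*} [Ring R] [PartialOrder R] [StarRing R]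
    [StarOrderedRing R] {a b : R} (hab : IsSelfAdjoint (a - b)) (hb : IsUnit b)
    (hb₀ : 0 ≤ b⁻¹ʳ) : 4 * a ≤ (a + b) * b⁻¹ʳ * (a + b) := by
  have complete_square :
      (a + b) * b⁻¹ʳ * (a + b) - 4 * a = (a - b) * b⁻¹ʳ * (a - b) := by
    simp only [add_mul, mul_add, sub_mul, mul_sub, mul_inverse_cancel b hb,
      inverse_mul_cancel_right b a hb, one_mul]
    noncomm_ring
  rw [← sub_nonneg, complete_square]
  exact hab.conjugate_nonneg hb₀

section ContinuousFunctionalCalculus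

variable {A : Type*} [PartialOrder A] [Ring A] [StarRing A] [TopologicalSpace A]
  [StarOrderedRing A] [Algebra ℝ A] [ContinuousFunctionalCalculus ℝ A IsSelfAdjoint]
  [NonnegSpectrumClass ℝ A]

section GeomMean

variable [SeparatelyContinuousMul A]

/-- The geometric mean `a # b = a^{1/2} (a^{-1/2} b a^{-1/2})^{1/2} a^{1/2}` of a strictly positive
`a` and a nonnegative `b`, in any algebra with a continuous functional calculus. It is the form of
the matrix mean `geo` on which the order theory of C⋆-algebras acts directly. -/
noncomputable def geomMean (a b : A) : A :=
  conjSqrt a (sqrt (conjSqrt a⁻¹ʳ b))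

lemma conjSqrt_nonneg (c : A) {a : A} (ha : 0 ≤ a) : 0 ≤ conjSqrt c a := by
  simpa only [map_zero] using conjSqrt_le_conjSqrt (c := c) ha

lemma geomMean_nonneg (a b : A) : 0 ≤ geomMean a b :=
  conjSqrt_nonneg a (sqrt_nonneg _)

end GeomMean

variable [IsSemitopologicalRing A] [T2Space A]

lemma conjSqrt_mul_self {c : A} (hc : 0 ≤ c) (a : A) :
    conjSqrt c a * conjSqrt c a = conjSqrt c (a * c * a) := by
  calc sqrt c * a * sqrt c * (sqrt c * a * sqrt c)
      = sqrt c * (a * (sqrt c * sqrt c) * a) * sqrt c := by noncomm_ring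
    _ = sqrt c * (a * c * a) * sqrt c := by rw [sqrt_mul_sqrt_self c]

lemma sqrt_conjSqrt_mul_mul {c a : A} (hc : 0 ≤ c) (ha : 0 ≤ a) :
    sqrt (conjSqrt c (a * c * a)) = conjSqrt c a :=
  sqrt_unique (conjSqrt_mul_self hc a) (conjSqrt_nonneg c ha)

lemma geomMean_mul_ringInverse_mul_geomMean {a b : A} (ha : IsStrictlyPositive a) (hb : 0 ≤ b) :
    geomMean a b * a⁻¹ʳ * geomMean a b = b := by
  have conjSqrt_geomMean : conjSqrt a⁻¹ʳ (geomMean a b) = sqrt (conjSqrt a⁻¹ʳ b) :=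
    conjSqrt_ringInverse_conjSqrt a _
  calc geomMean a b * a⁻¹ʳ * geomMean a b
      = conjSqrt a (conjSqrt a⁻¹ʳ (geomMean a b * a⁻¹ʳ * geomMean a b)) :=
        (conjSqrt_conjSqrt_ringInverse a _).symm
    _ = conjSqrt a (conjSqrt a⁻¹ʳ b) := by
        rw [← conjSqrt_mul_self ha.ringInverse.nonneg, conjSqrt_geomMean,
          sqrt_mul_sqrt_self _ (conjSqrt_nonneg _ hb)]
    _ = b := conjSqrt_conjSqrt_ringInverse a b

lemma geomMean_unique {a b t : A} (ha : IsStrictlyPositive a) (ht : 0 ≤ t)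
    (h : t * a⁻¹ʳ * t = b) : geomMean a b = t := by
  rw [geomMean, ← h, sqrt_conjSqrt_mul_mul ha.ringInverse.nonneg ht,
    conjSqrt_conjSqrt_ringInverse a]

lemma ringInverse_rpow {a : A} (ha : IsStrictlyPositive a) (p : ℝ) : (a ^ p)⁻¹ʳ = a ^ (-p) := by
  obtain rfl | hp := eq_or_ne p 0
  · simp only [neg_zero, rpow_zero a, inverse_one]
  · exact inverse_rpow a p hp

end ContinuousFunctionalCalculus

section CStarAlgebra

variable {A : Type*} [CStarAlgebra A] [PartialOrder A] [StarOrderedRing A]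

lemma le_geomMean {a b t : A} (ha : IsStrictlyPositive a) (ht : 0 ≤ t)
    (h : t * a⁻¹ʳ * t ≤ b) : t ≤ geomMean a b := by
  calc t = conjSqrt a (conjSqrt a⁻¹ʳ t) := (conjSqrt_conjSqrt_ringInverse a t).symm
    _ = conjSqrt a (sqrt (conjSqrt a⁻¹ʳ (t * a⁻¹ʳ * t))) := by
        rw [sqrt_conjSqrt_mul_mul ha.ringInverse.nonneg ht]
    _ ≤ geomMean a b :=
        conjSqrt_le_conjSqrt (sqrt_le_sqrt _ _ (conjSqrt_le_conjSqrt h))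

lemma isStrictlyPositive_mean {a b : A} (ha : IsStrictlyPositive a) (hb : IsStrictlyPositive b) :
    IsStrictlyPositive ((1 / 2 : ℝ) • (a + b)) :=
  (ha.add_nonneg hb.nonneg).smul (by norm_num)

lemma ringInverse_mean_le_geomMean {a b : A} (ha : IsStrictlyPositive a)
    (hb : IsStrictlyPositive b) :
    ((1 / 2 : ℝ) • (a + b))⁻¹ʳ ≤ geomMean a⁻¹ʳ b⁻¹ʳ := by
  set m := (1 / 2 : ℝ) • (a + b)
  have hm : IsStrictlyPositive m := isStrictlyPositive_mean ha hb
  have a_le : a ≤ m * b⁻¹ʳ * m := by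
    have four_mul_le := four_mul_le_add_mul_ringInverse_mul_add
      (ha.isSelfAdjoint.sub hb.isSelfAdjoint) hb.isUnit hb.ringInverse.nonneg
    have add_eq : a + b = (2 : ℝ) • m := by module
    have four_mul_eq : 4 * a = (4 : ℝ) • a := by rw [ofNat_smul_eq_nsmul, nsmul_eq_mul]; rfl
    calc a = (1 / 4 : ℝ) • (4 * a) := by rw [four_mul_eq]; module
      _ ≤ (1 / 4 : ℝ) • ((a + b) * b⁻¹ʳ * (a + b)) :=
          smul_le_smul_of_nonneg_left four_mul_le (by norm_num)
      _ = m * b⁻¹ʳ * m := by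
          rw [add_eq]
          simp only [smul_mul_assoc, mul_smul_comm]
          module
  refine le_geomMean ha.ringInverse hm.ringInverse.nonneg ?_
  calc m⁻¹ʳ * a⁻¹ʳ⁻¹ʳ * m⁻¹ʳ = m⁻¹ʳ * a * m⁻¹ʳ := by rw [inverse_inverse ha.isUnit]
    _ ≤ m⁻¹ʳ * (m * b⁻¹ʳ * m) * m⁻¹ʳ := conjugate_le_conjugate_of_nonneg a_le hm.ringInverse.nonneg
    _ = (m⁻¹ʳ * m) * b⁻¹ʳ * (m * m⁻¹ʳ) := by noncomm_ring
    _ = b⁻¹ʳ := by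
        rw [inverse_mul_cancel m hm.isUnit, mul_inverse_cancel m hm.isUnit, one_mul, mul_one]

lemma rpow_mean_le_geomMean {p : ℝ} (hp : p ∈ Set.Icc (-1 : ℝ) 0) {a b : A}
    (ha : IsStrictlyPositive a) (hb : IsStrictlyPositive b) :
    ((1 / 2 : ℝ) • (a + b)) ^ p ≤ geomMean (a ^ p) (b ^ p) := by
  have hp' : -p ∈ Set.Icc (0 : ℝ) 1 := ⟨neg_nonneg.mpr hp.2, neg_le.mp hp.1⟩
  have ha' : IsStrictlyPositive (a ^ (-p)) := ha.rpow a (-p)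
  have hb' : IsStrictlyPositive (b ^ (-p)) := hb.rpow b (-p)
  have concave : (1 / 2 : ℝ) • (a ^ (-p) + b ^ (-p)) ≤ ((1 / 2 : ℝ) • (a + b)) ^ (-p) := by
    simpa only [smul_add] using (concaveOn_rpow hp').2 ha.nonneg hb.nonneg
      (by norm_num : (0 : ℝ) ≤ 1 / 2) (by norm_num : (0 : ℝ) ≤ 1 / 2) (by norm_num)
  calc ((1 / 2 : ℝ) • (a + b)) ^ p = (((1 / 2 : ℝ) • (a + b)) ^ (-p))⁻¹ʳ := by
        rw [ringInverse_rpow (isStrictlyPositive_mean ha hb), neg_neg]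
    _ ≤ ((1 / 2 : ℝ) • (a ^ (-p) + b ^ (-p)))⁻¹ʳ :=
        CStarAlgebra.ringInverse_le_ringInverse concave (isStrictlyPositive_mean ha' hb')
    _ ≤ geomMean (a ^ (-p))⁻¹ʳ (b ^ (-p))⁻¹ʳ := ringInverse_mean_le_geomMean ha' hb'
    _ = geomMean (a ^ p) (b ^ p) := by
        rw [ringInverse_rpow ha, ringInverse_rpow hb, neg_neg]

end CStarAlgebra

section Matrix

open scoped MatrixOrder Matrix.Norms.L2Operator
open Matrix

lemma kronecker_le_kronecker {𝕜 k m : Type*} [RCLike 𝕜] [Finite k] [Finite m]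
    {A A' : Matrix k k 𝕜} {B B' : Matrix m m 𝕜}
    (hA : A ≤ A') (hB : B ≤ B') (hB₀ : 0 ≤ B) (hA'₀ : 0 ≤ A') : A ⊗ₖ B ≤ A' ⊗ₖ B' := by
  have sub_eq : A' ⊗ₖ B' - A ⊗ₖ B = A' ⊗ₖ (B' - B) + (A' - A) ⊗ₖ B := by
    ext ⟨i, j⟩ ⟨i', j'⟩
    simp only [Matrix.sub_apply, Matrix.add_apply, kronecker_apply]
    ring
  rw [le_iff, sub_eq]
  exact (hA'₀.posSemidef.kronecker (le_iff.mp hB)).add ((le_iff.mp hA).kronecker hB₀.posSemidef)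

variable {k m : Type*} [Fintype k] [DecidableEq k] [Fintype m] [DecidableEq m]

lemma geomMean_kronecker {𝕜 : Type*} [RCLike 𝕜] {X Y : Matrix k k 𝕜}
    {Z W : Matrix m m 𝕜} (hX : X.PosDef) (hZ : Z.PosDef) (hY : Y.PosSemidef) (hW : W.PosSemidef) :
    geomMean (X ⊗ₖ Z) (Y ⊗ₖ W) = geomMean X Y ⊗ₖ geomMean Z W := by
  refine geomMean_unique (hX.kronecker hZ).isStrictlyPositive
    ((geomMean_nonneg X Y).posSemidef.kronecker (geomMean_nonneg Z W).posSemidef).nonneg ?_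
  rw [← nonsing_inv_eq_ringInverse, inv_kronecker, ← mul_kronecker_mul, ← mul_kronecker_mul,
    nonsing_inv_eq_ringInverse, nonsing_inv_eq_ringInverse,
    geomMean_mul_ringInverse_mul_geomMean hX.isStrictlyPositive hY.nonneg,
    geomMean_mul_ringInverse_mul_geomMean hZ.isStrictlyPositive hW.nonneg]

lemma mpow_eq_rpow {A : Matrix k k ℂ} (hA : 0 ≤ A) (p : ℝ) : mpow A p = A ^ p :=
  (rpow_eq_cfc_real hA).symm

lemma mpow_posDef {A : Matrix k k ℂ} (hA : A.PosDef) (p : ℝ) : (mpow A p).PosDef := by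
  rw [mpow_eq_rpow hA.posSemidef.nonneg]
  exact (hA.isStrictlyPositive.rpow A p).posDef

lemma geo_eq_geomMean {X Y : Matrix k k ℂ} (hX : X.PosDef) (hY : Y.PosSemidef) :
    geo X Y = geomMean X Y := by
  have mpow_half : mpow X (1 / 2) = sqrt X := by
    rw [mpow_eq_rpow hX.posSemidef.nonneg, sqrt_eq_rpow]
  have mpow_neg_half : mpow X (-(1 / 2)) = sqrt X⁻¹ʳ := by
    rw [mpow_eq_rpow hX.posSemidef.nonneg, sqrt_ringInverse, sqrt_eq_rpow,
      ringInverse_rpow hX.isStrictlyPositive]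
  rw [geo, mpow_half, mpow_neg_half, ← conjSqrt_apply (c := X⁻¹ʳ),
    mpow_eq_rpow (conjSqrt_nonneg _ hY.nonneg), ← sqrt_eq_rpow, geomMean, conjSqrt_apply (c := X)]

lemma geo_posSemidef {X Y : Matrix k k ℂ} (hX : X.PosDef) (hY : Y.PosSemidef) :
    (geo X Y).PosSemidef := by
  rw [geo_eq_geomMean hX hY]
  exact (geomMean_nonneg X Y).posSemidef

lemma geo_kronecker {X Y : Matrix k k ℂ} {Z W : Matrix m m ℂ} (hX : X.PosDef)
    (hZ : Z.PosDef) (hY : Y.PosSemidef) (hW : W.PosSemidef) :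
    geo (X ⊗ₖ Z) (Y ⊗ₖ W) = geo X Y ⊗ₖ geo Z W := by
  rw [geo_eq_geomMean (hX.kronecker hZ) (hY.kronecker hW), geo_eq_geomMean hX hY,
    geo_eq_geomMean hZ hW, geomMean_kronecker hX hZ hY hW]

lemma mpow_mean_le_geo {p : ℝ} (hp : p ∈ Set.Icc (-1 : ℝ) 0) {A B : Matrix k k ℂ}
    (hA : A.PosDef) (hB : B.PosDef) :
    mpow ((1 / 2 : ℝ) • (A + B)) p ≤ geo (mpow A p) (mpow B p) := by
  have hAB := isStrictlyPositive_mean hA.isStrictlyPositive hB.isStrictlyPositive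
  rw [geo_eq_geomMean (mpow_posDef hA p) (mpow_posDef hB p).posSemidef, mpow_eq_rpow hAB.nonneg,
    mpow_eq_rpow hA.posSemidef.nonneg, mpow_eq_rpow hB.posSemidef.nonneg]
  exact rpow_mean_le_geomMean hp hA.isStrictlyPositive hB.isStrictlyPositive

end Matrix

theorem tensor_power_jointly_log_convex {k m : Type*} [Fintype k] [DecidableEq k]
    [Fintype m] [DecidableEq m] (p q : ℝ) (hp : p ∈ Set.Icc (-1 : ℝ) 0)
    (hq : q ∈ Set.Icc (-1 : ℝ) 0)
    (A₁ A₂ : Matrix k k ℂ) (B₁ B₂ : Matrix m m ℂ)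
    (hA₁ : A₁.PosDef) (hA₂ : A₂.PosDef) (hB₁ : B₁.PosDef) (hB₂ : B₂.PosDef) :
    LoewnerLE
      (mpow ((1/2 : ℝ) • (A₁ + A₂)) p ⊗ₖ mpow ((1/2 : ℝ) • (B₁ + B₂)) q)
      (geo (mpow A₁ p ⊗ₖ mpow B₁ q) (mpow A₂ p ⊗ₖ mpow B₂ q)) := by
  have hA₁p := mpow_posDef hA₁ p
  have hA₂p := (mpow_posDef hA₂ p).posSemidef
  have hB₁q := mpow_posDef hB₁ q
  have hB₂q := (mpow_posDef hB₂ q).posSemidef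
  have hB : (mpow ((1 / 2 : ℝ) • (B₁ + B₂)) q).PosSemidef :=
    (mpow_posDef ((hB₁.add hB₂).smul one_half_pos) q).posSemidef
  rw [geo_kronecker hA₁p hB₁q hA₂p hB₂q]
  exact kronecker_le_kronecker (mpow_mean_le_geo hp hA₁ hA₂) (mpow_mean_le_geo hq hB₁ hB₂)
    hB.nonneg (geo_posSemidef hA₁p hA₂p).nonneg
end

section
/- For positive definite matrices A₁,…,A_n and B₁,…,B_n and 0 < p ≤ 1, the trace Minkowski inequality holds: Tr[(Σᵢ (Aᵢ+Bᵢ)^p)^{1/p}] ≥ Tr[(Σᵢ Aᵢ^p)^{1/p}] + Tr[(Σᵢ Bᵢ^p)^{1/p}]. -/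
open scoped ComplexOrder Kronecker

/-!
For positive semidefinite `A` and `Z`, left multiplication by `A` and right multiplication by `Z`
commute, so `Tr (Cᴴ A ^ p C Z ^ (1 - p))` is the quadratic form in `C` of `a ^ p * z ^ (1 - p)`
applied to this pair. Since `a ^ p * z ^ (1 - p)` is an integral of parallel sums of `a` and `t * z`
with a positive weight in `t`, and the form of a parallel sum is a minimum over `K` of
`Tr (Kᴴ A K) + t Tr ((C - K)ᴴ (C - K) Z)`, which is linear in `(A, Z)`, the trace is superadditive
in `(A, Z)`: this is Lieb's concavity theorem.

Let `X`, `Y`, `S` be the sums of the `p`-th powers of the `A i`, the `B i` and the `A i + B i`, and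
put `Z = X ^ (1 / p)`, `W = Y ^ (1 / p)`, `T = S ^ (1 / p)`. As `Tr Z = Tr (X Z ^ (1 - p))` and
likewise for `W`, Lieb's theorem and Young's inequality for traces give
`Tr Z + Tr W ≤ Tr (S (Z + W) ^ (1 - p)) ≤ p Tr T + (1 - p) (Tr Z + Tr W)`.
-/

open Matrix MeasureTheory Set

section ScalarParallelSum

/-- The parallel sum of two nonnegative reals; the junk value `0 / 0 = 0` is the intended value at
`a = b = 0`. -/
noncomputable def parallelSum (a b : ℝ) : ℝ := a * b / (a + b)

lemma parallelSum_mul_norm_sq_le {E : Type*} [SeminormedAddCommGroup E] {a b : ℝ} (ha : 0 ≤ a)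
    (hb : 0 ≤ b) (c k : E) :
    parallelSum a b * ‖c‖ ^ 2 ≤ a * ‖k‖ ^ 2 + b * ‖c - k‖ ^ 2 := by
  have h_tri : ‖c‖ ≤ ‖k‖ + ‖c - k‖ := by simpa using norm_add_le k (c - k)
  have h_sq : ‖c‖ ^ 2 ≤ (‖k‖ + ‖c - k‖) ^ 2 := by gcongr
  rcases (add_nonneg ha hb).eq_or_lt' with hab | hab
  · simp only [parallelSum, hab, div_zero, zero_mul]
    positivity
  rw [parallelSum, div_mul_eq_mul_div, div_le_iff₀ hab]
  nlinarith [sq_nonneg (a * ‖k‖ - b * ‖c - k‖), mul_le_mul_of_nonneg_left h_sq (mul_nonneg ha hb)]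

lemma parallelSum_mul_norm_sq_eq {𝕜 E : Type*} [RCLike 𝕜] [SeminormedAddCommGroup E]
    [NormedSpace 𝕜 E] {a b : ℝ} (ha : 0 ≤ a) (hb : 0 ≤ b) (c : E) :
    parallelSum a b * ‖c‖ ^ 2 =
      a * ‖((b / (a + b) : ℝ) : 𝕜) • c‖ ^ 2 + b * ‖c - ((b / (a + b) : ℝ) : 𝕜) • c‖ ^ 2 := by
  rcases (add_nonneg ha hb).eq_or_lt' with hab | hab
  · obtain ⟨rfl, rfl⟩ := (add_eq_zero_iff_of_nonneg ha hb).1 hab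
    simp [parallelSum]
  have h_compl : c - ((b / (a + b) : ℝ) : 𝕜) • c = ((a / (a + b) : ℝ) : 𝕜) • c := by
    rw [sub_eq_iff_eq_add, ← add_smul, ← RCLike.ofReal_add, ← add_div, div_self hab.ne',
      RCLike.ofReal_one, one_smul]
  rw [h_compl, parallelSum]
  simp only [norm_smul, RCLike.norm_ofReal, mul_pow, sq_abs]
  field_simp
  ring

lemma rpow_mul_parallelSum_eq_rpowIntegrand {p a z t : ℝ} (hp : p ∈ Ioo 0 1) (ha : 0 ≤ a)
    (hz : 0 ≤ z) (ht : 0 < t) :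
    t ^ (p - 2) * parallelSum a (t * z) = z * Real.rpowIntegrand₀₁ p t (a / z) := by
  rcases hz.eq_or_lt' with rfl | hz
  · simp [parallelSum]
  have h_pow : t ^ (p - 1) = t ^ (p - 2) * t := by
    rw [← Real.rpow_add_one ht.ne']
    ring_nf
  rw [Real.rpowIntegrand₀₁_eq_pow_div hp ht.le (by positivity), parallelSum, h_pow]
  field_simp
  ring

lemma integrableOn_rpow_mul_parallelSum {p a z : ℝ} (hp : p ∈ Ioo 0 1) (ha : 0 ≤ a) (hz : 0 ≤ z) :
    IntegrableOn (fun t => t ^ (p - 2) * parallelSum a (t * z)) (Ioi 0) :=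
  (integrableOn_congr_fun (fun _ ht => rpow_mul_parallelSum_eq_rpowIntegrand hp ha hz ht)
    measurableSet_Ioi).2
    ((Real.integrableOn_rpowIntegrand₀₁_Ioi hp (div_nonneg ha hz)).const_mul z)

lemma integral_rpow_mul_parallelSum {p a z : ℝ} (hp : p ∈ Ioo 0 1) (ha : 0 ≤ a) (hz : 0 ≤ z) :
    ∫ t in Ioi 0, t ^ (p - 2) * parallelSum a (t * z) =
      a ^ p * z ^ (1 - p) * ∫ t in Ioi 0, Real.rpowIntegrand₀₁ p t 1 := by
  rw [setIntegral_congr_fun measurableSet_Ioi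
      fun t ht => rpow_mul_parallelSum_eq_rpowIntegrand hp ha hz ht,
    integral_const_mul, Real.integral_rpowIntegrand₀₁_eq_rpow_mul_const hp (div_nonneg ha hz),
    ← mul_assoc]
  congr 1
  rcases hz.eq_or_lt' with rfl | hz
  · simp [Real.zero_rpow (sub_pos.2 hp.2).ne']
  · rw [Real.div_rpow ha hz.le, Real.rpow_sub hz, Real.rpow_one]
    ring

end ScalarParallelSum

section SplitCost

variable {𝕜 m n : Type*} [RCLike 𝕜] [Fintype m] [Fintype n]

/-- The cost of splitting `C` as `K + (C - K)`. Its minimum over `K` is the quadratic form at `C` of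
the parallel sum of left multiplication by `A` and right multiplication by `t • Z`. -/
noncomputable def splitCost (A : Matrix m m 𝕜) (Z : Matrix n n 𝕜) (t : ℝ)
    (C K : Matrix m n 𝕜) : ℝ :=
  RCLike.re (Kᴴ * A * K).trace + t * RCLike.re ((C - K)ᴴ * (C - K) * Z).trace

lemma splitCost_add (A B : Matrix m m 𝕜) (Z W : Matrix n n 𝕜) (t : ℝ) (C K : Matrix m n 𝕜) :
    splitCost (A + B) (Z + W) t C K = splitCost A Z t C K + splitCost B W t C K := by
  simp only [splitCost, Matrix.mul_add, Matrix.add_mul, trace_add, map_add]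
  ring

end SplitCost

section JointForm

variable {𝕜 m n : Type*} [RCLike 𝕜] [Fintype m] [DecidableEq m] [Fintype n] [DecidableEq n]
  {A B : Matrix m m 𝕜} {Z W : Matrix n n 𝕜}

/-- The matrix of `C` with respect to eigenbases of `Z` (source) and `A` (target). -/
noncomputable def eigenCoords (hA : A.IsHermitian) (hZ : Z.IsHermitian) (C : Matrix m n 𝕜) :
    Matrix m n 𝕜 :=
  (hA.eigenvectorUnitary : Matrix m m 𝕜)ᴴ * C * (hZ.eigenvectorUnitary : Matrix n n 𝕜)

/-- The quadratic form `C ↦ ⟨C, f(L, R) C⟩` for the Hilbert–Schmidt inner product, where `L` and `R`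
are the commuting operators of left multiplication by `A` and right multiplication by `Z`. It is
written in eigenbases of `A` and `Z`, in which `f(L, R)` is diagonal. -/
noncomputable def jointForm (hA : A.IsHermitian) (hZ : Z.IsHermitian) (f : ℝ → ℝ → ℝ)
    (C : Matrix m n 𝕜) : ℝ :=
  ∑ i, ∑ j, f (hA.eigenvalues i) (hZ.eigenvalues j) * ‖eigenCoords hA hZ C i j‖ ^ 2

lemma eigenCoords_sub (hA : A.IsHermitian) (hZ : Z.IsHermitian) (C K : Matrix m n 𝕜) :
    eigenCoords hA hZ (C - K) = eigenCoords hA hZ C - eigenCoords hA hZ K := by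
  simp only [eigenCoords, Matrix.mul_sub, Matrix.sub_mul]

lemma eigenCoords_surjective (hA : A.IsHermitian) (hZ : Z.IsHermitian) :
    Function.Surjective (eigenCoords hA hZ) := by
  intro k
  let U : Matrix m m 𝕜 := hA.eigenvectorUnitary
  let V : Matrix n n 𝕜 := hZ.eigenvectorUnitary
  have hU : Uᴴ * U = 1 := Unitary.coe_star_mul_self hA.eigenvectorUnitary
  have hV : Vᴴ * V = 1 := Unitary.coe_star_mul_self hZ.eigenvectorUnitary
  refine ⟨U * k * Vᴴ, ?_⟩
  calc Uᴴ * (U * k * Vᴴ) * V = (Uᴴ * U) * k * (Vᴴ * V) := by simp only [Matrix.mul_assoc]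
    _ = k := by rw [hU, hV, Matrix.one_mul, Matrix.mul_one]

lemma re_trace_conjTranspose_mul_diagonal_mul_diagonal (D : m → ℝ) (E : n → ℝ)
    (M : Matrix m n 𝕜) :
    RCLike.re (Mᴴ * diagonal (fun i => (D i : 𝕜)) * M * diagonal (fun j => (E j : 𝕜))).trace =
      ∑ i, ∑ j, D i * E j * ‖M i j‖ ^ 2 := by
  have h_entry (i : m) (j : n) :
      star (M i j) * (D i : 𝕜) * M i j * (E j : 𝕜) = ((D i * E j * ‖M i j‖ ^ 2 : ℝ) : 𝕜) := by
    push_cast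
    rw [← RCLike.conj_mul, starRingEnd_apply]
    ring
  rw [Finset.sum_comm]
  simp only [trace, diag_apply, mul_diagonal, mul_apply (N := M), conjTranspose_apply,
    Finset.sum_mul, h_entry, map_sum, RCLike.ofReal_re]

lemma jointForm_mul (hA : A.IsHermitian) (hZ : Z.IsHermitian) (f g : ℝ → ℝ) (C : Matrix m n 𝕜) :
    jointForm hA hZ (fun a z => f a * g z) C =
      RCLike.re (Cᴴ * cfc f A * C * cfc g Z).trace := by
  let U : Matrix m m 𝕜 := hA.eigenvectorUnitary
  let V : Matrix n n 𝕜 := hZ.eigenvectorUnitary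
  let D : Matrix m m 𝕜 := diagonal fun i => (f (hA.eigenvalues i) : 𝕜)
  let E : Matrix n n 𝕜 := diagonal fun j => (g (hZ.eigenvalues j) : 𝕜)
  have hf : cfc f A = U * D * Uᴴ := by
    rw [hA.cfc_eq, IsHermitian.cfc, Unitary.conjStarAlgAut_apply]
    rfl
  have hg : cfc g Z = V * E * Vᴴ := by
    rw [hZ.cfc_eq, IsHermitian.cfc, Unitary.conjStarAlgAut_apply]
    rfl
  have h_cycle : (Cᴴ * cfc f A * C * cfc g Z).trace =
      ((Uᴴ * C * V)ᴴ * D * (Uᴴ * C * V) * E).trace := by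
    calc (Cᴴ * cfc f A * C * cfc g Z).trace
        = (Cᴴ * U * D * Uᴴ * C * V * E * Vᴴ).trace := by simp only [hf, hg, Matrix.mul_assoc]
      _ = (Vᴴ * (Cᴴ * U * D * Uᴴ * C * V * E)).trace := trace_mul_comm _ _
      _ = ((Uᴴ * C * V)ᴴ * D * (Uᴴ * C * V) * E).trace := by
        simp only [conjTranspose_mul, conjTranspose_conjTranspose, Matrix.mul_assoc]
  rw [h_cycle]
  exact (re_trace_conjTranspose_mul_diagonal_mul_diagonal _ _ _).symm

lemma jointForm_left (hA : A.IsHermitian) (hZ : Z.IsHermitian) (C : Matrix m n 𝕜) :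
    jointForm hA hZ (fun a _ => a) C = RCLike.re (Cᴴ * A * C).trace := by
  simpa [cfc_id' ℝ A hA.isSelfAdjoint, cfc_const_one ℝ Z hZ.isSelfAdjoint] using
    jointForm_mul hA hZ (fun a => a) (fun _ => 1) C

lemma jointForm_right (hA : A.IsHermitian) (hZ : Z.IsHermitian) (C : Matrix m n 𝕜) :
    jointForm hA hZ (fun _ z => z) C = RCLike.re (Cᴴ * C * Z).trace := by
  simpa [cfc_id' ℝ Z hZ.isSelfAdjoint, cfc_const_one ℝ A hA.isSelfAdjoint] using
    jointForm_mul hA hZ (fun _ => 1) (fun z => z) C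

lemma jointForm_linear_combination (hA : A.IsHermitian) (hZ : Z.IsHermitian) (r s : ℝ)
    (f g : ℝ → ℝ → ℝ) (C : Matrix m n 𝕜) :
    jointForm hA hZ (fun a z => r * f a z + s * g a z) C =
      r * jointForm hA hZ f C + s * jointForm hA hZ g C := by
  simp only [jointForm, Finset.mul_sum, ← Finset.sum_add_distrib]
  refine Finset.sum_congr rfl fun i _ => Finset.sum_congr rfl fun j _ => ?_
  ring

lemma jointForm_mono (hA : A.PosSemidef) (hZ : Z.PosSemidef) {f g : ℝ → ℝ → ℝ}
    (hfg : ∀ a z, 0 ≤ a → 0 ≤ z → f a z ≤ g a z) (C : Matrix m n 𝕜) :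
    jointForm hA.isHermitian hZ.isHermitian f C ≤ jointForm hA.isHermitian hZ.isHermitian g C := by
  unfold jointForm
  gcongr with i _ j _
  exact hfg _ _ (hA.eigenvalues_nonneg i) (hZ.eigenvalues_nonneg j)

lemma splitCost_eq_sum (hA : A.IsHermitian) (hZ : Z.IsHermitian) (t : ℝ) (C K : Matrix m n 𝕜) :
    splitCost A Z t C K =
      ∑ i, ∑ j, (hA.eigenvalues i * ‖eigenCoords hA hZ K i j‖ ^ 2 +
        t * hZ.eigenvalues j * ‖eigenCoords hA hZ C i j - eigenCoords hA hZ K i j‖ ^ 2) := by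
  rw [splitCost, ← jointForm_left hA hZ, ← jointForm_right hA hZ]
  simp only [jointForm, eigenCoords_sub, Matrix.sub_apply, Finset.mul_sum, Finset.sum_add_distrib,
    mul_assoc]

lemma jointForm_parallelSum_le_splitCost (hA : A.PosSemidef) (hZ : Z.PosSemidef) {t : ℝ}
    (ht : 0 ≤ t) (C K : Matrix m n 𝕜) :
    jointForm hA.isHermitian hZ.isHermitian (fun a z => parallelSum a (t * z)) C ≤
      splitCost A Z t C K := by
  rw [splitCost_eq_sum hA.isHermitian hZ.isHermitian, jointForm]
  gcongr with i _ j _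
  exact parallelSum_mul_norm_sq_le (hA.eigenvalues_nonneg i)
    (mul_nonneg ht (hZ.eigenvalues_nonneg j)) _ _

lemma exists_splitCost_eq_jointForm_parallelSum (hA : A.PosSemidef) (hZ : Z.PosSemidef) {t : ℝ}
    (ht : 0 ≤ t) (C : Matrix m n 𝕜) :
    ∃ K, splitCost A Z t C K =
      jointForm hA.isHermitian hZ.isHermitian (fun a z => parallelSum a (t * z)) C := by
  let a := hA.isHermitian.eigenvalues
  let z := hZ.isHermitian.eigenvalues
  let c := eigenCoords hA.isHermitian hZ.isHermitian C
  obtain ⟨K, hK⟩ := eigenCoords_surjective hA.isHermitian hZ.isHermitian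
    (.of fun i j => ((t * z j / (a i + t * z j) : ℝ) : 𝕜) • c i j)
  refine ⟨K, ?_⟩
  simp only [splitCost_eq_sum hA.isHermitian hZ.isHermitian, jointForm, hK, of_apply]
  refine Finset.sum_congr rfl fun i _ => Finset.sum_congr rfl fun j _ => ?_
  exact (parallelSum_mul_norm_sq_eq (hA.eigenvalues_nonneg i)
    (mul_nonneg ht (hZ.eigenvalues_nonneg j)) _).symm

lemma jointForm_parallelSum_superadditive (hA : A.PosSemidef) (hB : B.PosSemidef)
    (hZ : Z.PosSemidef) (hW : W.PosSemidef) {t : ℝ} (ht : 0 ≤ t) (C : Matrix m n 𝕜) :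
    jointForm hA.isHermitian hZ.isHermitian (fun a z => parallelSum a (t * z)) C +
        jointForm hB.isHermitian hW.isHermitian (fun a z => parallelSum a (t * z)) C ≤
      jointForm (hA.add hB).isHermitian (hZ.add hW).isHermitian
        (fun a z => parallelSum a (t * z)) C := by
  obtain ⟨K, hK⟩ := exists_splitCost_eq_jointForm_parallelSum (hA.add hB) (hZ.add hW) ht C
  rw [← hK, splitCost_add]
  exact add_le_add (jointForm_parallelSum_le_splitCost hA hZ ht C K)
    (jointForm_parallelSum_le_splitCost hB hW ht C K)

lemma integrableOn_rpow_mul_jointForm_parallelSum (hA : A.PosSemidef) (hZ : Z.PosSemidef) {p : ℝ}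
    (hp : p ∈ Ioo 0 1) (C : Matrix m n 𝕜) :
    IntegrableOn (fun t => t ^ (p - 2) *
      jointForm hA.isHermitian hZ.isHermitian (fun a z => parallelSum a (t * z)) C) (Ioi 0) := by
  simp only [jointForm, Finset.mul_sum, ← mul_assoc]
  exact integrable_finsetSum _ fun i _ => integrable_finsetSum _ fun j _ =>
    (integrableOn_rpow_mul_parallelSum hp (hA.eigenvalues_nonneg i)
      (hZ.eigenvalues_nonneg j)).mul_const _

lemma integral_rpow_mul_jointForm_parallelSum (hA : A.PosSemidef) (hZ : Z.PosSemidef) {p : ℝ}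
    (hp : p ∈ Ioo 0 1) (C : Matrix m n 𝕜) :
    ∫ t in Ioi 0, t ^ (p - 2) *
        jointForm hA.isHermitian hZ.isHermitian (fun a z => parallelSum a (t * z)) C =
      jointForm hA.isHermitian hZ.isHermitian (fun a z => a ^ p * z ^ (1 - p)) C *
        ∫ t in Ioi 0, Real.rpowIntegrand₀₁ p t 1 := by
  have h_int (i : m) (j : n) := (integrableOn_rpow_mul_parallelSum hp (hA.eigenvalues_nonneg i)
    (hZ.eigenvalues_nonneg j)).mul_const
      (‖eigenCoords hA.isHermitian hZ.isHermitian C i j‖ ^ 2)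
  simp only [jointForm, Finset.mul_sum, Finset.sum_mul, ← mul_assoc]
  rw [integral_finsetSum _ fun i _ => integrable_finsetSum _ fun j _ => h_int i j]
  refine Finset.sum_congr rfl fun i _ => ?_
  rw [integral_finsetSum _ fun j _ => h_int i j]
  refine Finset.sum_congr rfl fun j _ => ?_
  rw [integral_mul_const, integral_rpow_mul_parallelSum hp (hA.eigenvalues_nonneg i)
    (hZ.eigenvalues_nonneg j)]
  ring

lemma jointForm_rpow_mul_rpow_superadditive (hA : A.PosSemidef) (hB : B.PosSemidef)
    (hZ : Z.PosSemidef) (hW : W.PosSemidef) {p : ℝ} (hp : p ∈ Ioo 0 1) (C : Matrix m n 𝕜) :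
    jointForm hA.isHermitian hZ.isHermitian (fun a z => a ^ p * z ^ (1 - p)) C +
        jointForm hB.isHermitian hW.isHermitian (fun a z => a ^ p * z ^ (1 - p)) C ≤
      jointForm (hA.add hB).isHermitian (hZ.add hW).isHermitian
        (fun a z => a ^ p * z ^ (1 - p)) C := by
  have h_intA := integrableOn_rpow_mul_jointForm_parallelSum hA hZ hp C
  have h_intB := integrableOn_rpow_mul_jointForm_parallelSum hB hW hp C
  refine le_of_mul_le_mul_right ?_ (Real.integral_rpowIntegrand₀₁_one_pos hp)
  rw [add_mul, ← integral_rpow_mul_jointForm_parallelSum hA hZ hp,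
    ← integral_rpow_mul_jointForm_parallelSum hB hW hp,
    ← integral_rpow_mul_jointForm_parallelSum (hA.add hB) (hZ.add hW) hp,
    ← integral_add h_intA h_intB]
  refine setIntegral_mono_on (h_intA.add h_intB)
    (integrableOn_rpow_mul_jointForm_parallelSum (hA.add hB) (hZ.add hW) hp C)
    measurableSet_Ioi fun t (ht : 0 < t) => ?_
  rw [← mul_add]
  gcongr
  exact jointForm_parallelSum_superadditive hA hB hZ hW ht.le C

end JointForm

section MatrixPower

variable {m n : Type*} [Fintype m] [DecidableEq m] [Fintype n] [DecidableEq n]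

open scoped MatrixOrder in
lemma nonneg_of_mem_spectrum_real {A : Matrix n n ℂ} (hA : A.PosSemidef) {x : ℝ}
    (hx : x ∈ spectrum ℝ A) : 0 ≤ x :=
  spectrum_nonneg_of_nonneg (nonneg_iff_posSemidef.2 hA) hx

open scoped MatrixOrder in
lemma posSemidef_mpow {A : Matrix n n ℂ} (hA : A.PosSemidef) (p : ℝ) : (mpow A p).PosSemidef :=
  nonneg_iff_posSemidef.1 <| cfc_nonneg fun _ hx =>
    Real.rpow_nonneg (nonneg_of_mem_spectrum_real hA hx) p

lemma mpow_zero {A : Matrix n n ℂ} (hA : A.IsHermitian) : mpow A 0 = 1 := by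
  simpa only [mpow, Real.rpow_zero] using cfc_const_one ℝ A hA.isSelfAdjoint

lemma mpow_one {A : Matrix n n ℂ} (hA : A.IsHermitian) : mpow A 1 = A := by
  simpa only [mpow, Real.rpow_one] using cfc_id' ℝ A hA.isSelfAdjoint

lemma mpow_mpow {A : Matrix n n ℂ} (hA : A.PosSemidef) (p q : ℝ) :
    mpow (mpow A p) q = mpow A (p * q) := by
  have h_fin : (spectrum ℝ A).Finite := A.finite_real_spectrum
  unfold mpow
  rw [← cfc_comp' (· ^ q) (· ^ p) A ((h_fin.image _).continuousOn _) (h_fin.continuousOn _)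
    hA.isHermitian.isSelfAdjoint]
  exact cfc_congr fun _ hx => (Real.rpow_mul (nonneg_of_mem_spectrum_real hA hx) p q).symm

lemma mpow_mul_mpow {A : Matrix n n ℂ} (hA : A.PosSemidef) {p q : ℝ} (hp : 0 ≤ p) (hq : 0 ≤ q) :
    mpow A p * mpow A q = mpow A (p + q) := by
  have h_fin : (spectrum ℝ A).Finite := A.finite_real_spectrum
  unfold mpow
  rw [← cfc_mul (· ^ p) (· ^ q) A (h_fin.continuousOn _) (h_fin.continuousOn _)]
  exact cfc_congr fun _ hx =>
    (Real.rpow_add_of_nonneg (nonneg_of_mem_spectrum_real hA hx) hp hq).symm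

lemma mpow_one_div_eq_mul {A : Matrix n n ℂ} (hA : A.PosSemidef) {p : ℝ} (hp0 : 0 < p)
    (hp1 : p ≤ 1) : mpow A (1 / p) = A * mpow (mpow A (1 / p)) (1 - p) := by
  have h_exp : 1 / p = 1 + 1 / p * (1 - p) := by
    field_simp
    ring
  calc mpow A (1 / p) = mpow A 1 * mpow A (1 / p * (1 - p)) := by
        rw [mpow_mul_mpow hA zero_le_one (mul_nonneg (one_div_nonneg.2 hp0.le) (sub_nonneg.2 hp1)),
          ← h_exp]
    _ = A * mpow (mpow A (1 / p)) (1 - p) := by rw [mpow_one hA.isHermitian, mpow_mpow hA]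

lemma jointForm_rpow_mul_rpow {A : Matrix m m ℂ} {Z : Matrix n n ℂ} (hA : A.IsHermitian)
    (hZ : Z.IsHermitian) (p q : ℝ) (C : Matrix m n ℂ) :
    jointForm hA hZ (fun a z => a ^ p * z ^ q) C = (Cᴴ * mpow A p * C * mpow Z q).trace.re :=
  jointForm_mul hA hZ (· ^ p) (· ^ q) C

theorem lieb_trace_superadditive {A B : Matrix m m ℂ} {Z W : Matrix n n ℂ} (hA : A.PosSemidef)
    (hB : B.PosSemidef) (hZ : Z.PosSemidef) (hW : W.PosSemidef) {p : ℝ} (hp : p ∈ Icc 0 1)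
    (C : Matrix m n ℂ) :
    (Cᴴ * mpow A p * C * mpow Z (1 - p)).trace.re + (Cᴴ * mpow B p * C * mpow W (1 - p)).trace.re ≤
      (Cᴴ * mpow (A + B) p * C * mpow (Z + W) (1 - p)).trace.re := by
  rcases hp.1.eq_or_lt with rfl | hp0
  · simp only [mpow_zero, mpow_one, hA.isHermitian, hB.isHermitian, hZ.isHermitian, hW.isHermitian,
      IsHermitian.add, sub_zero, Matrix.mul_add, trace_add, Complex.add_re, le_refl]
  rcases hp.2.eq_or_lt with rfl | hp1
  · simp only [mpow_zero, mpow_one, hA.isHermitian, hB.isHermitian, hZ.isHermitian, hW.isHermitian,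
      IsHermitian.add, sub_self, Matrix.mul_add, Matrix.add_mul, trace_add, Complex.add_re, le_refl]
  simpa only [jointForm_rpow_mul_rpow] using
    jointForm_rpow_mul_rpow_superadditive hA hB hZ hW ⟨hp0, hp1⟩ C

lemma lieb_trace_sum_superadditive {ι : Type*} (s : Finset ι) {A B : ι → Matrix m m ℂ}
    {Z W : Matrix n n ℂ} (hA : ∀ i ∈ s, (A i).PosSemidef) (hB : ∀ i ∈ s, (B i).PosSemidef)
    (hZ : Z.PosSemidef) (hW : W.PosSemidef) {p : ℝ} (hp : p ∈ Icc 0 1) (C : ι → Matrix m n ℂ) :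
    ((∑ i ∈ s, (C i)ᴴ * mpow (A i) p * C i) * mpow Z (1 - p)).trace.re +
        ((∑ i ∈ s, (C i)ᴴ * mpow (B i) p * C i) * mpow W (1 - p)).trace.re ≤
      ((∑ i ∈ s, (C i)ᴴ * mpow (A i + B i) p * C i) * mpow (Z + W) (1 - p)).trace.re := by
  simp only [Finset.sum_mul, trace_sum, Complex.re_sum, ← Finset.sum_add_distrib]
  exact Finset.sum_le_sum fun i hi =>
    lieb_trace_superadditive (hA i hi) (hB i hi) hZ hW hp (C i)

theorem trace_mpow_mul_mpow_le {A Z : Matrix n n ℂ} (hA : A.PosSemidef) (hZ : Z.PosSemidef)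
    {p : ℝ} (hp : p ∈ Icc 0 1) :
    (mpow A p * mpow Z (1 - p)).trace.re ≤ p * A.trace.re + (1 - p) * Z.trace.re := by
  have h_young := jointForm_mono hA hZ (f := fun a z => a ^ p * z ^ (1 - p))
    (g := fun a z => p * a + (1 - p) * z) (fun a z ha hz =>
      Real.geom_mean_le_arith_mean2_weighted hp.1 (sub_nonneg.2 hp.2) ha hz (by ring)) 1
  rw [jointForm_rpow_mul_rpow, jointForm_linear_combination, jointForm_left,
    jointForm_right] at h_young
  simpa only [RCLike.re_eq_complex_re, conjTranspose_one, Matrix.one_mul, Matrix.mul_one]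
    using h_young

lemma trace_mpow_one_div_add_le {X Y S : Matrix n n ℂ} (hX : X.PosSemidef) (hY : Y.PosSemidef)
    (hS : S.PosSemidef) {p : ℝ} (hp0 : 0 < p) (hp1 : p ≤ 1)
    (h : ∀ Z W : Matrix n n ℂ, Z.PosSemidef → W.PosSemidef →
      (X * mpow Z (1 - p)).trace.re + (Y * mpow W (1 - p)).trace.re ≤
        (S * mpow (Z + W) (1 - p)).trace.re) :
    (mpow X (1 / p)).trace.re + (mpow Y (1 / p)).trace.re ≤ (mpow S (1 / p)).trace.re := by
  have hZ := posSemidef_mpow hX (1 / p)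
  have hW := posSemidef_mpow hY (1 / p)
  have hT := posSemidef_mpow hS (1 / p)
  have h_sum := h _ _ hZ hW
  rw [← mpow_one_div_eq_mul hX hp0 hp1, ← mpow_one_div_eq_mul hY hp0 hp1] at h_sum
  have h_root : mpow (mpow S (1 / p)) p = S := by
    rw [mpow_mpow hS, one_div_mul_cancel hp0.ne', mpow_one hS.isHermitian]
  have h_young := trace_mpow_mul_mpow_le hT (hZ.add hW) ⟨hp0.le, hp1⟩
  rw [h_root, trace_add, Complex.add_re] at h_young
  exact le_of_mul_le_mul_left (by linarith) hp0

end MatrixPower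

theorem carlen_lieb_trace_minkowski_concave_general {ι m n : Type*} [Fintype m] [DecidableEq m]
    [Fintype n] [DecidableEq n] (s : Finset ι) (A B : ι → Matrix m m ℂ) (C : ι → Matrix m n ℂ)
    (hA : ∀ i ∈ s, (A i).PosSemidef) (hB : ∀ i ∈ s, (B i).PosSemidef)
    (p : ℝ) (hp0 : 0 < p) (hp1 : p ≤ 1) :
    (mpow (∑ i ∈ s, (C i)ᴴ * mpow (A i) p * C i) (1 / p)).trace.re
        + (mpow (∑ i ∈ s, (C i)ᴴ * mpow (B i) p * C i) (1 / p)).trace.re ≤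
      (mpow (∑ i ∈ s, (C i)ᴴ * mpow (A i + B i) p * C i) (1 / p)).trace.re := by
  have h_psd {D : ι → Matrix m m ℂ} (hD : ∀ i ∈ s, (D i).PosSemidef) :
      (∑ i ∈ s, (C i)ᴴ * mpow (D i) p * C i).PosSemidef :=
    posSemidef_sum s fun i hi => (posSemidef_mpow (hD i hi) p).conjTranspose_mul_mul_same (C i)
  exact trace_mpow_one_div_add_le (h_psd hA) (h_psd hB)
    (h_psd fun i hi => (hA i hi).add (hB i hi)) hp0 hp1 fun _ _ hZ hW =>
      lieb_trace_sum_superadditive s hA hB hZ hW ⟨hp0.le, hp1⟩ C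

theorem carlen_lieb_trace_minkowski_concave {d : Type*} [Fintype d] [DecidableEq d]
    (N : ℕ) (A B : Fin N → Matrix d d ℂ)
    (hA : ∀ i, (A i).PosDef) (hB : ∀ i, (B i).PosDef)
    (p : ℝ) (hp0 : 0 < p) (hp1 : p ≤ 1) :
    (mpow (∑ i, mpow (A i) p) (1/p)).trace.re
        + (mpow (∑ i, mpow (B i) p) (1/p)).trace.re ≤
      (mpow (∑ i, mpow (A i + B i) p) (1/p)).trace.re := by
  simpa only [conjTranspose_one, Matrix.one_mul, Matrix.mul_one] using
    carlen_lieb_trace_minkowski_concave_general Finset.univ A B (fun _ => (1 : Matrix d d ℂ))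
      (fun i _ => (hA i).posSemidef) (fun i _ => (hB i).posSemidef) p hp0 hp1
end
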